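/- arXiv:1102.0748 — 2 statements merged into one kernel-verified Lean document; each statement's English description precedes it below -/
import Mathlib

section
/- For every n ≥ 1 and k ≥ 0, r_{n,k} = ∑ b_{|V_1|/2, k_1} ⋯ b_{|V_ℓ|/2, k_ℓ}, where the sum is over all non-crossing partitions {V_1,…,V_ℓ} of {1,…,2n} all of whose blocks have even size, together with all tuples of nonnegative integers (k_1,…,k_ℓ) with k_1 + ⋯ + k_ℓ = k. -/
open scoped Classical

/-- Asymmetric crossing of two chords: `B = {a,b}` with `a < b` starts strictly
before `C = {c,d}` and they interleave: `a < c < b < d`. -/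
def CrossAsym (B C : Finset ℕ) : Prop :=
  ∃ a b c d : ℕ, a < c ∧ c < b ∧ b < d ∧ B = {a, b} ∧ C = {c, d}

/-- Two blocks cross: `a < c < b < d` or `c < a < d < b`. -/
def Crosses (B C : Finset ℕ) : Prop := CrossAsym B C ∨ CrossAsym C B

/-- A pairing on `[2n] = {1, …, 2n}`: a partition of `{1, …, 2n}` into blocks of size 2. -/
def IsPairing (n : ℕ) (π : Finset (Finset ℕ)) : Prop :=
  (∀ B ∈ π, B.card = 2 ∧ B ⊆ Finset.Icc 1 (2 * n)) ∧
  (∀ x ∈ Finset.Icc 1 (2 * n), ∃! B, B ∈ π ∧ x ∈ B)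

/-- Number of crossings of a pairing: the number of unordered pairs of blocks that cross
(each crossing unordered pair `{B, C}` satisfies the asymmetric condition exactly once). -/
noncomputable def crNum (π : Finset (Finset ℕ)) : ℕ :=
  Set.ncard {p : Finset ℕ × Finset ℕ | p.1 ∈ π ∧ p.2 ∈ π ∧ CrossAsym p.1 p.2}

/-- A pairing is parity-reversing if each block consists of one odd and one even number. -/
def ParityReversing (π : Finset (Finset ℕ)) : Prop :=
  ∀ B ∈ π, ∃ a b : ℕ, B = {a, b} ∧ Odd a ∧ Even b

/-- A pairing is connected if its blocks cannot be split into two nonempty families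
with no crossing between the families. -/
def ConnectedPairing (π : Finset (Finset ℕ)) : Prop :=
  ¬ ∃ S T : Finset (Finset ℕ), S ∪ T = π ∧ Disjoint S T ∧ S.Nonempty ∧ T.Nonempty ∧
      ∀ B ∈ S, ∀ C ∈ T, ¬ Crosses B C

/-- `tCount n k`: the number of pairings on `[2n]` with exactly `k` crossings. -/
noncomputable def tCount (n k : ℕ) : ℕ :=
  Set.ncard {π : Finset (Finset ℕ) | IsPairing n π ∧ crNum π = k}

/-- `rCount n k`: the number of parity-reversing pairings on `[2n]` with exactly `k` crossings. -/
noncomputable def rCount (n k : ℕ) : ℕ :=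
  Set.ncard {π : Finset (Finset ℕ) | IsPairing n π ∧ ParityReversing π ∧ crNum π = k}

/-- `bCount n k`: the number of connected parity-reversing pairings on `[2n]`
with exactly `k` crossings. -/
noncomputable def bCount (n k : ℕ) : ℕ :=
  Set.ncard {π : Finset (Finset ℕ) |
    IsPairing n π ∧ ParityReversing π ∧ ConnectedPairing π ∧ crNum π = k}

/-- `bTot n`: the number of connected parity-reversing pairings on `[2n]` (equals 1 for `n = 0`). -/
noncomputable def bTot (n : ℕ) : ℕ :=
  Set.ncard {π : Finset (Finset ℕ) |
    IsPairing n π ∧ ParityReversing π ∧ ConnectedPairing π}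

/-- The Touchard alternating sum `∑_{k=-n}^n (-1)^k q^{k(k-1)/2} C(2n, n+k)`. -/
noncomputable def touchardSum (n : ℕ) (q : ℂ) : ℂ :=
  ∑ k ∈ Finset.Icc (-(n : ℤ)) (n : ℤ),
    (-1 : ℂ) ^ k * q ^ ((k * (k - 1)) / 2).toNat * ((2 * n).choose ((n : ℤ) + k).toNat : ℂ)

/-- `T_n(q) = ∑_k t_{n,k} q^k` as a complex polynomial function
(all crossing numbers of pairings on `[2n]` satisfy `k ≤ n*n`). -/
noncomputable def Tpoly (n : ℕ) (q : ℂ) : ℂ :=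
  ∑ k ∈ Finset.range (n * n + 1), (tCount n k : ℂ) * q ^ k

/-- `T_n(q) = ∑_k t_{n,k} q^k` as a real polynomial function. -/
noncomputable def TpolyR (n : ℕ) (q : ℝ) : ℝ :=
  ∑ k ∈ Finset.range (n * n + 1), (tCount n k : ℝ) * q ^ k

/-- `R_n(q) = ∑_k r_{n,k} q^k` as a real polynomial function. -/
noncomputable def RpolyR (n : ℕ) (q : ℝ) : ℝ :=
  ∑ k ∈ Finset.range (n * n + 1), (rCount n k : ℝ) * q ^ k

/-- Non-crossing partitions of `{1, …, 2n}` all of whose blocks have even size. -/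
noncomputable def NCEvenPartitions (n : ℕ) : Finset (Finset (Finset ℕ)) :=
  ((Finset.Icc 1 (2 * n)).powerset.powerset).filter (fun π =>
    (∀ B ∈ π, B.Nonempty ∧ Even B.card) ∧
    (∀ x ∈ Finset.Icc 1 (2 * n), ∃! B, B ∈ π ∧ x ∈ B) ∧
    ¬ ∃ a b c d : ℕ, a < b ∧ b < c ∧ c < d ∧
        ∃ B ∈ π, ∃ C ∈ π, B ≠ C ∧ a ∈ B ∧ c ∈ B ∧ b ∈ C ∧ d ∈ C)

/-!
The supports of the connected components of the crossing graph of a pairing form a noncrossing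
partition: for two points `p < q` of a block, a connected family of blocks disjoint from it and not
crossing it lies entirely inside or entirely outside the interval between `p` and `q`. This is the
only noncrossing partition coarser than the pairing on each of whose blocks the pairing restricts
to a connected one, and prescribing it reduces the choice of a pairing to independent choices of
connected pairings of its blocks, whose crossing numbers add up.

Replacing the elements of a block `V` by their ranks in `V` turns the connected pairings of `V` into
those counted by `b`. It respects the parity-reversing condition because each other block has an
even number of elements between two given elements of `V`, namely none or all of them.
-/

section Finpartition

open Finset

variable {α β : Type*} [DecidableEq α] [DecidableEq β] {s : Finset α} {t : Finset β}

lemma finpartition_parts_injective :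
    Function.Injective (Finpartition.parts : Finpartition s → Finset (Finset α)) :=
  fun _ _ => Finpartition.ext

lemma mem_parts_restrict_of_le {π P : Finpartition s} (h : π ≤ P) {V B : Finset α}
    (hV : V ∈ P.parts) : B ∈ (π.restrict (P.le hV)).parts ↔ B ∈ π.parts ∧ B ⊆ V := by
  simp only [Finpartition.restrict, mem_erase, mem_image, bot_eq_empty, inf_eq_inter]
  constructor
  · rintro ⟨hne, C, hC, rfl⟩
    obtain ⟨x, hx⟩ := nonempty_iff_ne_empty.2 hne
    obtain ⟨W, hW, hCW⟩ := h hC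
    obtain rfl : W = V :=
      P.eq_of_mem_parts hW hV (hCW (mem_of_mem_inter_left hx)) (mem_of_mem_inter_right hx)
    rw [inter_eq_left.2 hCW]
    exact ⟨hC, hCW⟩
  · rintro ⟨hB, hBV⟩
    exact ⟨π.ne_empty hB, B, hB, inter_eq_left.2 hBV⟩

lemma finpartition_bind_restrict {π P : Finpartition s} (h : π ≤ P) :
    P.bind (fun _ hV => π.restrict (P.le hV)) = π := by
  ext B
  rw [Finpartition.mem_bind]
  constructor
  · rintro ⟨V, hV, hB⟩
    exact ((mem_parts_restrict_of_le h hV).1 hB).1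
  · intro hB
    obtain ⟨V, hV, hBV⟩ := h hB
    exact ⟨V, hV, (mem_parts_restrict_of_le h hV).2 ⟨hB, hBV⟩⟩

lemma finpartition_bind_le (P : Finpartition s) (Q : ∀ V ∈ P.parts, Finpartition V) :
    P.bind Q ≤ P := by
  intro B hB
  obtain ⟨V, hV, hBV⟩ := Finpartition.mem_bind.1 hB
  exact ⟨V, hV, (Q V hV).le hBV⟩

lemma finpartition_restrict_bind {P : Finpartition s} (Q : ∀ V ∈ P.parts, Finpartition V)
    {V : Finset α} (hV : V ∈ P.parts) : (P.bind Q).restrict (P.le hV) = Q V hV := by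
  ext B
  rw [mem_parts_restrict_of_le (finpartition_bind_le P Q) hV, Finpartition.mem_bind]
  constructor
  · rintro ⟨⟨W, hW, hB⟩, hBV⟩
    obtain ⟨x, hx⟩ := (Q W hW).nonempty_of_mem_parts hB
    obtain rfl := P.eq_of_mem_parts hV hW (hBV hx) ((Q W hW).le hB hx)
    exact hB
  · intro hB
    exact ⟨⟨V, hV, hB⟩, (Q V hV).le hB⟩

lemma forall_mem_parts_iff_of_le {π P : Finpartition s} (h : π ≤ P) {p : Finset α → Prop} :
    (∀ B ∈ π.parts, p B) ↔ ∀ V (hV : V ∈ P.parts), ∀ B ∈ (π.restrict (P.le hV)).parts, p B := by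
  conv_lhs => rw [← finpartition_bind_restrict h]
  simp only [Finpartition.mem_bind]
  exact ⟨fun hp V hV B hB => hp B ⟨V, hV, hB⟩, fun hp B ⟨V, hV, hB⟩ => hp V hV B hB⟩

/-- The coarsening of a finpartition `P` whose blocks are the unions of the families of blocks
grouped together by a finpartition of `P.parts`. -/
def coarsen (P : Finpartition s) (K : Finpartition P.parts) : Finpartition s :=
  Finpartition.ofExistsUnique (K.parts.image fun σ => σ.biUnion id)
    (by
      simp only [forall_mem_image, biUnion_subset]
      exact fun σ hσ B hB => P.le (K.le hσ hB))
    (by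
      intro x hx
      obtain ⟨B, hB, hxB⟩ := P.exists_mem hx
      obtain ⟨σ, hσ, hBσ⟩ := K.exists_mem hB
      refine ⟨σ.biUnion id, ⟨mem_image_of_mem _ hσ, mem_biUnion.2 ⟨B, hBσ, hxB⟩⟩, ?_⟩
      rintro _ ⟨hτ', hxτ⟩
      obtain ⟨τ, hτ, rfl⟩ := mem_image.1 hτ'
      obtain ⟨C, hC, hxC⟩ := mem_biUnion.1 hxτ
      obtain rfl := P.eq_of_mem_parts hB (K.le hτ hC) hxB hxC
      rw [K.eq_of_mem_parts hτ hσ hC hBσ])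
    (by
      simp only [mem_image, not_exists, not_and]
      intro σ hσ
      obtain ⟨B, hB⟩ := K.nonempty_of_mem_parts hσ
      obtain ⟨x, hx⟩ := P.nonempty_of_mem_parts (K.le hσ hB)
      exact ne_empty_of_mem (mem_biUnion.2 ⟨B, hB, hx⟩))

lemma mem_parts_coarsen {P : Finpartition s} {K : Finpartition P.parts} {V : Finset α} :
    V ∈ (coarsen P K).parts ↔ ∃ σ ∈ K.parts, σ.biUnion id = V :=
  mem_image

lemma le_coarsen (P : Finpartition s) (K : Finpartition P.parts) : P ≤ coarsen P K := by
  intro B hB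
  obtain ⟨σ, hσ, hBσ⟩ := K.exists_mem hB
  exact ⟨σ.biUnion id, mem_parts_coarsen.2 ⟨σ, hσ, rfl⟩, subset_biUnion_of_mem id hBσ⟩

lemma parts_restrict_coarsen {P : Finpartition s} {K : Finpartition P.parts}
    {σ : Finset (Finset α)} (hσ : σ ∈ K.parts) (hV : σ.biUnion id ∈ (coarsen P K).parts) :
    (P.restrict ((coarsen P K).le hV)).parts = σ := by
  ext B
  rw [mem_parts_restrict_of_le (le_coarsen P K) hV]
  constructor
  · rintro ⟨hB, hBσ⟩
    obtain ⟨x, hx⟩ := P.nonempty_of_mem_parts hB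
    obtain ⟨C, hC, hxC⟩ := mem_biUnion.1 (hBσ hx)
    rwa [P.eq_of_mem_parts hB (K.le hσ hC) hx hxC]
  · exact fun hB => ⟨K.le hσ hB, subset_biUnion_of_mem id hB⟩

lemma even_card_of_forall_mem_parts {P : Finpartition s} (h : ∀ B ∈ P.parts, Even #B) :
    Even #s := by
  rw [← P.sum_card_parts]
  exact even_sum _ h

lemma exists_finpartition_parts_eq_iff {π : Finset (Finset α)} :
    (∃ P : Finpartition s, P.parts = π) ↔
      (∀ B ∈ π, B.Nonempty ∧ B ⊆ s) ∧ ∀ x ∈ s, ∃! B, B ∈ π ∧ x ∈ B := by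
  constructor
  · rintro ⟨P, rfl⟩
    exact ⟨fun B hB => ⟨P.nonempty_of_mem_parts hB, P.le hB⟩, fun x hx => P.existsUnique_mem hx⟩
  · rintro ⟨hπ, hx⟩
    exact ⟨Finpartition.ofExistsUnique π (fun B hB => (hπ B hB).2) hx
      (fun h => not_nonempty_empty (hπ ∅ h).1), rfl⟩

lemma card_filter_le_and_restrict_mem (P : Finpartition s)
    (T : ∀ V ∈ P.parts, Finset (Finpartition V)) :
    #{π : Finpartition s | π ≤ P ∧ ∀ V (hV : V ∈ P.parts), π.restrict (P.le hV) ∈ T V hV} =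
      ∏ V ∈ P.parts.attach, #(T V.1 V.2) := by
  rw [← univ_eq_attach, ← Fintype.card_piFinset fun V : {V // V ∈ P.parts} => T V.1 V.2]
  refine card_nbij' (fun π V => π.restrict (P.le V.2)) (fun Q => P.bind fun V hV => Q ⟨V, hV⟩)
    ?_ ?_ ?_ ?_
  · intro π hπ
    exact Fintype.mem_piFinset.2 fun V => (mem_filter.1 hπ).2.2 V.1 V.2
  · intro Q hQ
    refine mem_filter.2 ⟨mem_univ _, finpartition_bind_le P _, fun V hV => ?_⟩
    rw [finpartition_restrict_bind]
    exact Fintype.mem_piFinset.1 hQ ⟨V, hV⟩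
  · intro π hπ
    exact finpartition_bind_restrict (mem_filter.1 hπ).2.1
  · intro Q _
    funext V
    exact finpartition_restrict_bind _ V.2

/-- The finpartition of `t` obtained from one of `s` along a bijection `e` from `s` to `t`. -/
def imageFinpartition {e : α → β} (he : Set.BijOn e s t) (π : Finpartition s) : Finpartition t :=
  Finpartition.ofExistsUnique (π.parts.image (image e))
    (by
      simp only [forall_mem_image, image_subset_iff]
      exact fun B hB x hx => he.mapsTo (π.le hB hx))
    (by
      intro y hy
      obtain ⟨x, hx, rfl⟩ := he.surjOn hy
      obtain ⟨B, hB, hxB⟩ := π.exists_mem hx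
      refine ⟨B.image e, ⟨mem_image_of_mem _ hB, mem_image_of_mem _ hxB⟩, ?_⟩
      rintro _ ⟨hC', hxC⟩
      obtain ⟨C, hC, rfl⟩ := mem_image.1 hC'
      obtain ⟨z, hzC, hzx⟩ := mem_image.1 hxC
      obtain rfl := he.injOn (π.le hC hzC) hx hzx
      rw [π.eq_of_mem_parts hC hB hzC hxB])
    (by simp)

lemma parts_imageFinpartition {e : α → β} (he : Set.BijOn e s t) (π : Finpartition s) :
    (imageFinpartition he π).parts = π.parts.image (image e) :=
  rfl

lemma imageFinpartition_imageFinpartition {e : α → β} {g : β → α} (he : Set.BijOn e s t)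
    (hg : Set.BijOn g t s) (hge : Set.LeftInvOn g e s) (π : Finpartition s) :
    imageFinpartition hg (imageFinpartition he π) = π := by
  ext1
  simp only [parts_imageFinpartition, image_image]
  conv_rhs => rw [← image_id (s := π.parts)]
  refine image_congr fun B hB => ?_
  rw [Function.comp_apply, image_image]
  exact (image_congr fun x hx => hge (π.le hB hx)).trans image_id

lemma bijective_imageFinpartition [Nonempty α] {e : α → β} (he : Set.BijOn e s t) :
    Function.Bijective (imageFinpartition (s := s) (t := t) he) := by
  have hinv := he.invOn_invFunOn
  have hg : Set.BijOn (Function.invFunOn e s) t s := he.symm hinv.symm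
  exact Function.bijective_iff_has_inverse.2 ⟨imageFinpartition hg,
    imageFinpartition_imageFinpartition he hg hinv.1,
    imageFinpartition_imageFinpartition hg he hinv.2⟩

end Finpartition

section Crossing

open Finset

variable {α β : Type*} [LinearOrder α] [LinearOrder β] {s : Finset α}

/-- `B` interleaves `C` if some elements `a < b < c < d` lie alternately in `B`, `C`, `B`, `C`. -/
def Interleaves (B C : Finset α) : Prop :=
  ∃ a ∈ B, ∃ b ∈ C, ∃ c ∈ B, ∃ d ∈ C, a < b ∧ b < c ∧ c < d

/-- The symmetric crossing relation between blocks of arbitrary size. -/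
def BlocksCross (B C : Finset α) : Prop :=
  Interleaves B C ∨ Interleaves C B

/-- A subfamily `S` of `π` is crossing-closed if it contains every block of `π` crossing one of its
members; these are the unions of connected components of the crossing graph. -/
def IsCrossingClosed (π S : Finset (Finset α)) : Prop :=
  ∀ B ∈ S, ∀ C ∈ π, BlocksCross B C → C ∈ S

/-- Connectedness of the crossing graph of a family of blocks; the empty family is connected. -/
def IsCrossingConnected (π : Finset (Finset α)) : Prop :=
  ∀ S ⊆ π, S.Nonempty → IsCrossingClosed π S → S = π

/-- The family `P` has no two distinct crossing blocks. -/
def IsNoncrossing (P : Finset (Finset α)) : Prop :=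
  (P : Set (Finset α)).Pairwise fun B C => ¬ Interleaves B C

lemma Interleaves.mono {B B' C C' : Finset α} (h : Interleaves B C) (hB : B ⊆ B') (hC : C ⊆ C') :
    Interleaves B' C' := by
  obtain ⟨a, ha, b, hb, c, hc, d, hd, hlt⟩ := h
  exact ⟨a, hB ha, b, hC hb, c, hB hc, d, hC hd, hlt⟩

lemma blocksCross_comm {B C : Finset α} : BlocksCross B C ↔ BlocksCross C B :=
  or_comm

lemma BlocksCross.mono {B B' C C' : Finset α} (h : BlocksCross B C) (hB : B ⊆ B') (hC : C ⊆ C') :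
    BlocksCross B' C' :=
  h.imp (fun h => h.mono hB hC) (fun h => h.mono hC hB)

lemma IsNoncrossing.not_blocksCross {P : Finset (Finset α)} (hP : IsNoncrossing P) {B C : Finset α}
    (hB : B ∈ P) (hC : C ∈ P) (hne : B ≠ C) : ¬ BlocksCross B C := by
  rintro (h | h)
  · exact hP hB hC hne h
  · exact hP hC hB hne.symm h

lemma not_blocksCross_of_ordConnected {I : Set α} (hI : I.OrdConnected) {B C : Finset α}
    (hB : (B : Set α) ⊆ I) (hC : Disjoint (C : Set α) I) : ¬ BlocksCross B C := by
  rw [Set.disjoint_left] at hC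
  rintro (⟨a, ha, b, hb, c, hc, -, -, hab, hbc, -⟩ | ⟨-, -, b, hb, c, hc, d, hd, -, hbc, hcd⟩)
  · exact hC hb (hI.out (hB ha) (hB hc) ⟨hab.le, hbc.le⟩)
  · exact hC hc (hI.out (hB hb) (hB hd) ⟨hbc.le, hcd.le⟩)

lemma not_blocksCross_of_forall_Ioo {B C : Finset α}
    (h : ∀ p ∈ B, ∀ q ∈ B, (C : Set α) ⊆ Set.Ioo p q ∨ Disjoint (C : Set α) (Set.Ioo p q)) :
    ¬ BlocksCross B C := by
  rintro (⟨p, hp, x, hx, q, hq, y, hy, hpx, hxq, hqy⟩ | ⟨y, hy, p, hp, x, hx, q, hq, hyp, hpx, hxq⟩)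
  all_goals
    rcases h p hp q hq with h | h
    · obtain ⟨hpy, hyq⟩ := h hy
      order
    · exact Set.disjoint_left.1 h hx ⟨hpx, hxq⟩

lemma subset_Ioo_or_disjoint_Ioo {B C : Finset α} (hd : Disjoint B C) (hc : ¬ BlocksCross B C)
    {p q : α} (hp : p ∈ B) (hq : q ∈ B) :
    (C : Set α) ⊆ Set.Ioo p q ∨ Disjoint (C : Set α) (Set.Ioo p q) := by
  by_contra! h
  obtain ⟨⟨y, hyC, hy⟩, x, hxC, hpx, hxq⟩ :=
    And.imp Set.not_subset.1 Set.not_disjoint_iff.1 h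
  have hyp : y ≠ p := fun e => disjoint_left.1 hd hp (e ▸ hyC)
  have hyq : y ≠ q := fun e => disjoint_left.1 hd hq (e ▸ hyC)
  rcases hyp.lt_or_gt with hyp | hpy
  · exact hc (Or.inr ⟨y, hyC, p, hp, x, hxC, q, hq, hyp, hpx, hxq⟩)
  · have hqy : q < y := (not_lt.1 fun hyq' => hy ⟨hpy, hyq'⟩).lt_of_ne hyq.symm
    exact hc (Or.inl ⟨p, hp, x, hxC, q, hq, y, hyC, hpx, hxq, hqy⟩)

lemma isCrossingConnected_iff_forall_pred {π : Finset (Finset α)} :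
    IsCrossingConnected π ↔ ∀ p : Finset α → Prop,
      (∀ B ∈ π, ∀ C ∈ π, BlocksCross B C → p B → p C) → ∀ B ∈ π, ∀ C ∈ π, p B → p C := by
  constructor
  · intro h p hp B hB C hC hpB
    have hS := h {D ∈ π | p D} (filter_subset _ _) ⟨B, mem_filter.2 ⟨hB, hpB⟩⟩ fun D hD E hE hDE =>
      mem_filter.2 ⟨hE, hp D (mem_filter.1 hD).1 E hE hDE (mem_filter.1 hD).2⟩
    exact (mem_filter.1 (hS ▸ hC)).2
  · rintro h S hS ⟨B, hB⟩ hclosed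
    exact hS.antisymm fun C hC =>
      h (· ∈ S) (fun D _ E hE hDE hD => hclosed D hD E hE hDE) B (hS hB) C hC hB

lemma IsCrossingConnected.biUnion_subset_or_disjoint {π : Finset (Finset α)}
    (hπ : IsCrossingConnected π) {I : Set α} (hI : I.OrdConnected)
    (h : ∀ B ∈ π, (B : Set α) ⊆ I ∨ Disjoint (B : Set α) I) :
    ((π.biUnion id : Finset α) : Set α) ⊆ I ∨ Disjoint ((π.biUnion id : Finset α) : Set α) I := by
  by_cases hB : ∃ B ∈ π, (B : Set α) ⊆ I
  · obtain ⟨B, hB, hBI⟩ := hB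
    refine Or.inl fun x hx => ?_
    obtain ⟨C, hC, hxC⟩ := mem_biUnion.1 hx
    refine isCrossingConnected_iff_forall_pred.1 hπ (fun C => (C : Set α) ⊆ I) ?_ B hB C hC hBI hxC
    exact fun D _ E hE hDE hD =>
      (h E hE).resolve_right fun hE' => not_blocksCross_of_ordConnected hI hD hE' hDE
  · push Not at hB
    refine Or.inr (Set.disjoint_left.2 fun x hx => ?_)
    obtain ⟨C, hC, hxC⟩ := mem_biUnion.1 hx
    exact Set.disjoint_left.1 ((h C hC).resolve_left (hB C hC)) hxC

lemma IsCrossingConnected.not_blocksCross_biUnion {π : Finset (Finset α)}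
    (hπ : IsCrossingConnected π) {B : Finset α} (hd : ∀ C ∈ π, Disjoint B C)
    (hc : ∀ C ∈ π, ¬ BlocksCross B C) : ¬ BlocksCross B (π.biUnion id) :=
  not_blocksCross_of_forall_Ioo fun _ hp _ hq =>
    hπ.biUnion_subset_or_disjoint Set.ordConnected_Ioo fun C hC =>
      subset_Ioo_or_disjoint_Ioo (hd C hC) (hc C hC) hp hq

/-- The connected components of the crossing graph of `π`: two blocks belong to the same component
iff the same crossing-closed subfamilies contain them. -/
noncomputable def crossingComponents (π : Finset (Finset α)) : Finpartition π :=
  Finpartition.atomise π {S ∈ π.powerset | IsCrossingClosed π S}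

lemma mem_crossingComponents {π σ : Finset (Finset α)} :
    σ ∈ (crossingComponents π).parts ↔ σ.Nonempty ∧
      ∃ Q ⊆ {S ∈ π.powerset | IsCrossingClosed π S},
        {B ∈ π | ∀ S ∈ {S ∈ π.powerset | IsCrossingClosed π S}, S ∈ Q ↔ B ∈ S} = σ :=
  Finpartition.mem_atomise

lemma isCrossingClosed_of_mem_crossingComponents {π σ : Finset (Finset α)}
    (hσ : σ ∈ (crossingComponents π).parts) : IsCrossingClosed π σ := by
  obtain ⟨-, Q, -, rfl⟩ := mem_crossingComponents.1 hσ
  intro B hB C hC hBC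
  rw [mem_filter] at hB ⊢
  refine ⟨hC, fun S hS => (hB.2 S hS).trans ⟨fun hBS => ?_, fun hCS => ?_⟩⟩
  · exact (mem_filter.1 hS).2 B hBS C hC hBC
  · exact (mem_filter.1 hS).2 C hCS B hB.1 (blocksCross_comm.1 hBC)

lemma isCrossingConnected_of_mem_crossingComponents {π σ : Finset (Finset α)}
    (hσ : σ ∈ (crossingComponents π).parts) : IsCrossingConnected σ := by
  rintro S hS ⟨B, hB⟩ hclosed
  have hσπ := (crossingComponents π).le hσ
  have hS' : S ∈ {S ∈ π.powerset | IsCrossingClosed π S} :=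
    mem_filter.2 ⟨mem_powerset.2 (hS.trans hσπ), fun C hC D hD hCD =>
      hclosed C hC D
        (isCrossingClosed_of_mem_crossingComponents hσ C (hS hC) D hD hCD) hCD⟩
  obtain ⟨-, Q, -, rfl⟩ := mem_crossingComponents.1 hσ
  have hSQ := ((mem_filter.1 (hS hB)).2 S hS').2 hB
  exact hS.antisymm fun C hC => ((mem_filter.1 hC).2 S hS').1 hSQ

lemma not_blocksCross_biUnion_crossingComponents {π σ τ : Finset (Finset α)}
    (hd : (π : Set (Finset α)).PairwiseDisjoint id) (hσ : σ ∈ (crossingComponents π).parts)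
    (hτ : τ ∈ (crossingComponents π).parts) (hne : σ ≠ τ) :
    ¬ BlocksCross (σ.biUnion id) (τ.biUnion id) := by
  have hστ : Disjoint σ τ := (crossingComponents π).disjoint hσ hτ hne
  have hσπ := (crossingComponents π).le hσ
  have hτπ := (crossingComponents π).le hτ
  have hdisj : ∀ B ∈ σ, ∀ C ∈ τ, Disjoint B C := fun B hB C hC =>
    hd (hσπ hB) (hτπ hC) fun h => disjoint_left.1 hστ hB (h ▸ hC)
  have hcross : ∀ B ∈ σ, ∀ C ∈ τ, ¬ BlocksCross B C := fun B hB C hC h =>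
    disjoint_left.1 hστ (isCrossingClosed_of_mem_crossingComponents hσ B hB C (hτπ hC) h) hC
  rw [blocksCross_comm]
  refine (isCrossingConnected_of_mem_crossingComponents hσ).not_blocksCross_biUnion
    (fun B hB => (disjoint_biUnion_left _ _ _).2 fun C hC => (hdisj B hB C hC).symm) fun B hB => ?_
  rw [blocksCross_comm]
  exact (isCrossingConnected_of_mem_crossingComponents hτ).not_blocksCross_biUnion
    (hdisj B hB) (hcross B hB)

/-- The finest noncrossing partition that is coarser than `π`; its blocks are the supports of the
connected components of the crossing graph of `π`. -/
noncomputable def noncrossingClosure (π : Finpartition s) : Finpartition s :=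
  coarsen π (crossingComponents π.parts)

lemma isNoncrossing_noncrossingClosure (π : Finpartition s) :
    IsNoncrossing (noncrossingClosure π).parts := by
  intro V hV W hW hne
  obtain ⟨σ, hσ, rfl⟩ := mem_parts_coarsen.1 hV
  obtain ⟨τ, hτ, rfl⟩ := mem_parts_coarsen.1 hW
  exact fun h => not_blocksCross_biUnion_crossingComponents π.disjoint hσ hτ
    (fun hστ => hne (by rw [hστ])) (Or.inl h)

lemma isCrossingConnected_restrict_noncrossingClosure (π : Finpartition s) {V : Finset α}
    (hV : V ∈ (noncrossingClosure π).parts) :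
    IsCrossingConnected (π.restrict ((noncrossingClosure π).le hV)).parts := by
  obtain ⟨σ, hσ, rfl⟩ := mem_parts_coarsen.1 hV
  unfold noncrossingClosure
  rw [parts_restrict_coarsen hσ hV]
  exact isCrossingConnected_of_mem_crossingComponents hσ

lemma le_of_isCrossingConnected_restrict {π P Q : Finpartition s} (hP : π ≤ P)
    (hconn : ∀ V (hV : V ∈ P.parts), IsCrossingConnected (π.restrict (P.le hV)).parts)
    (hQ : π ≤ Q) (hnc : IsNoncrossing Q.parts) : P ≤ Q := by
  intro V hV
  obtain ⟨x, hx⟩ := P.nonempty_of_mem_parts hV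
  obtain ⟨B, hB, -⟩ := (π.restrict (P.le hV)).exists_mem hx
  have hmem : ∀ C ∈ (π.restrict (P.le hV)).parts, C ∈ π.parts := fun C hC =>
    ((mem_parts_restrict_of_le hP hV).1 hC).1
  obtain ⟨W, hW, hBW⟩ := hQ (hmem B hB)
  have hall := isCrossingConnected_iff_forall_pred.1 (hconn V hV) (· ⊆ W) (by
    intro C _ D hD hCD hCW
    obtain ⟨W', hW', hDW'⟩ := hQ (hmem D hD)
    by_contra hDW
    have hne : W ≠ W' := fun h => hDW (h ▸ hDW')
    exact hnc.not_blocksCross hW hW' hne (hCD.mono hCW hDW')) B hB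
  refine ⟨W, hW, fun y hy => ?_⟩
  obtain ⟨C, hC, hyC⟩ := (π.restrict (P.le hV)).exists_mem hy
  exact hall C hC hBW hyC

lemma noncrossingClosure_eq_iff {π P : Finpartition s} :
    noncrossingClosure π = P ↔ IsNoncrossing P.parts ∧ π ≤ P ∧
      ∀ V (hV : V ∈ P.parts), IsCrossingConnected (π.restrict (P.le hV)).parts := by
  constructor
  · rintro rfl
    exact ⟨isNoncrossing_noncrossingClosure π, le_coarsen π _, fun V hV =>
      isCrossingConnected_restrict_noncrossingClosure π hV⟩
  · rintro ⟨hnc, hle, hconn⟩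
    refine le_antisymm ?_ ?_
    · exact le_of_isCrossingConnected_restrict (le_coarsen π _)
        (fun V hV => isCrossingConnected_restrict_noncrossingClosure π hV) hle hnc
    · exact le_of_isCrossingConnected_restrict hle hconn (le_coarsen π _)
        (isNoncrossing_noncrossingClosure π)

lemma interleaves_image_iff {e : α → β} (he : StrictMonoOn e s) {B C : Finset α} (hB : B ⊆ s)
    (hC : C ⊆ s) : Interleaves (B.image e) (C.image e) ↔ Interleaves B C := by
  simp only [Interleaves, exists_mem_image]
  constructor
  · rintro ⟨a, ha, b, hb, c, hc, d, hd, hab, hbc, hcd⟩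
    exact ⟨a, ha, b, hb, c, hc, d, hd, (he.lt_iff_lt (hB ha) (hC hb)).1 hab,
      (he.lt_iff_lt (hC hb) (hB hc)).1 hbc, (he.lt_iff_lt (hB hc) (hC hd)).1 hcd⟩
  · rintro ⟨a, ha, b, hb, c, hc, d, hd, hab, hbc, hcd⟩
    exact ⟨a, ha, b, hb, c, hc, d, hd, he (hB ha) (hC hb) hab, he (hC hb) (hB hc) hbc,
      he (hB hc) (hC hd) hcd⟩

lemma isCrossingConnected_image_iff {e : α → β} (he : StrictMonoOn e s) {π : Finset (Finset α)}
    (hπ : ∀ B ∈ π, B ⊆ s) : IsCrossingConnected (π.image (image e)) ↔ IsCrossingConnected π := by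
  have hcross : ∀ B ∈ π, ∀ C ∈ π, BlocksCross (B.image e) (C.image e) ↔ BlocksCross B C :=
    fun B hB C hC => or_congr (interleaves_image_iff he (hπ B hB) (hπ C hC))
      (interleaves_image_iff he (hπ C hC) (hπ B hB))
  simp only [isCrossingConnected_iff_forall_pred, forall_mem_image]
  constructor
  · intro h p hp B hB C hC hpB
    have hinj : Set.InjOn (image e) (π : Set (Finset α)) :=
      (image_injOn_powerset_of_injOn he.injOn).mono fun D hD => mem_powerset.2 (hπ D hD)
    obtain ⟨D, hD, hpD, hDC⟩ := h (fun E => ∃ D ∈ π, p D ∧ D.image e = E) (by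
      rintro D hD E hE hDE ⟨D', hD', hpD, hDD'⟩
      obtain rfl := hinj hD' hD hDD'
      exact ⟨E, hE, hp D' hD E hE ((hcross D' hD E hE).1 hDE) hpD, rfl⟩) hB hC ⟨B, hB, hpB, rfl⟩
    rwa [← hinj hD hC hDC]
  · intro h p hp B hB C hC
    exact h (fun D => p (D.image e))
      (fun D hD E hE hDE => hp hD hE ((hcross D hD E hE).2 hDE)) B hB C hC

end Crossing

section Rank

open Finset

variable {α : Type*} [LinearOrder α] {s : Finset α}

/-- The position of `x` in the increasing enumeration of `V`, counted from `1`, when `x ∈ V`. -/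
def rankIn (V : Finset α) (x : α) : ℕ := #{z ∈ V | z ≤ x}

lemma strictMonoOn_rankIn (V : Finset α) : StrictMonoOn (rankIn V) V := by
  intro x _ y hy hxy
  refine card_lt_card (ssubset_iff_of_subset ?_ |>.2 ⟨y, ?_, ?_⟩)
  · exact monotone_filter_right V fun z _ hz => hz.trans hxy.le
  · exact mem_filter.2 ⟨hy, le_rfl⟩
  · exact fun hy' => hxy.not_ge (mem_filter.1 hy').2

lemma bijOn_rankIn (V : Finset α) : Set.BijOn (rankIn V) V (Icc 1 #V : Finset ℕ) := by
  have hmaps : Set.MapsTo (rankIn V) V (Icc 1 #V : Finset ℕ) := fun x hx =>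
    mem_coe.2 (mem_Icc.2 ⟨card_pos.2 ⟨x, mem_filter.2 ⟨hx, le_rfl⟩⟩, card_filter_le _ _⟩)
  have hinj := (strictMonoOn_rankIn V).injOn
  exact ⟨hmaps, hinj, surjOn_of_injOn_of_card_le _ hmaps hinj (by simp)⟩

lemma rankIn_Icc_one {m x : ℕ} (hx : x ≤ m) : rankIn (Icc 1 m) x = x := by
  have : {z ∈ Icc 1 m | z ≤ x} = Icc 1 x := by
    ext z
    simp only [mem_filter, mem_Icc]
    lia
  rw [rankIn, this, Nat.card_Icc, Nat.add_sub_cancel]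

lemma sum_rankIn_parts (P : Finpartition s) (x : α) : ∑ V ∈ P.parts, rankIn V x = rankIn s x := by
  have hdisj : (P.parts : Set (Finset α)).PairwiseDisjoint fun V => {z ∈ V | z ≤ x} :=
    P.disjoint.mono fun V => filter_subset _ V
  calc ∑ V ∈ P.parts, rankIn V x = #(P.parts.biUnion fun V => {z ∈ V | z ≤ x}) :=
        (card_biUnion hdisj).symm
    _ = #{z ∈ P.parts.biUnion id | z ≤ x} := by rw [filter_biUnion]; rfl
    _ = rankIn s x := by rw [P.biUnion_parts, rankIn]

lemma even_rankIn_add_rankIn_of_not_blocksCross {V W : Finset α} (hd : Disjoint V W)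
    (hc : ¬ BlocksCross V W) (hW : Even #W) {x y : α} (hx : x ∈ V) (hy : y ∈ V) :
    Even (rankIn W x + rankIn W y) := by
  wlog hxy : x ≤ y generalizing x y
  · rw [add_comm]
    exact this hy hx (le_of_not_ge hxy)
  rcases subset_Ioo_or_disjoint_Ioo hd hc hx hy with h | h
  · have h0 : rankIn W x = 0 := card_eq_zero.2 (filter_false_of_mem fun z hz => (h hz).1.not_ge)
    have h1 : rankIn W y = #W := congrArg card (filter_true_of_mem fun z hz => (h hz).2.le)
    rwa [h0, h1, zero_add]
  · have heq : rankIn W x = rankIn W y := by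
      refine congrArg card (filter_congr fun z hz => ⟨fun hzx => hzx.trans hxy, fun hzy => ?_⟩)
      have hzy' : z ≠ y := fun e => disjoint_left.1 hd hy (e ▸ hz)
      by_contra hzx
      exact Set.disjoint_left.1 h hz ⟨not_le.1 hzx, hzy.lt_of_ne hzy'⟩
    rw [heq]
    exact Even.add_self _

lemma even_rankIn_add_rankIn_iff {P : Finpartition s} (hnc : IsNoncrossing P.parts)
    (heven : ∀ V ∈ P.parts, Even #V) {V : Finset α} (hV : V ∈ P.parts) {x y : α} (hx : x ∈ V)
    (hy : y ∈ V) : Even (rankIn V x + rankIn V y) ↔ Even (rankIn s x + rankIn s y) := by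
  have hrest : Even (∑ W ∈ P.parts.erase V, (rankIn W x + rankIn W y)) :=
    even_sum _ fun W hW => by
      obtain ⟨hne, hW⟩ := mem_erase.1 hW
      exact even_rankIn_add_rankIn_of_not_blocksCross (P.disjoint hV hW hne.symm)
        (hnc.not_blocksCross hV hW hne.symm) (heven W hW) hx hy
  rw [← sum_rankIn_parts P x, ← sum_rankIn_parts P y, ← sum_add_distrib, ← add_sum_erase _ _ hV,
    Nat.even_add (m := rankIn V x + rankIn V y)]
  exact (iff_true_right hrest).symm

end Rank

section Pairing

open Finset

variable {s t : Finset ℕ} {π : Finset (Finset ℕ)}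

lemma crossAsym_iff {B C : Finset ℕ} :
    CrossAsym B C ↔ #B = 2 ∧ #C = 2 ∧ Interleaves B C := by
  constructor
  · rintro ⟨a, b, c, d, hac, hcb, hbd, rfl, rfl⟩
    exact ⟨card_pair (hac.trans hcb).ne, card_pair (hcb.trans hbd).ne,
      a, by simp, c, by simp, b, by simp, d, by simp, hac, hcb, hbd⟩
  · rintro ⟨hB, hC, a, ha, c, hc, b, hb, d, hd, hac, hcb, hbd⟩
    have eq_pair : ∀ {D : Finset ℕ} {x y : ℕ}, #D = 2 → x ∈ D → y ∈ D → x < y → D = {x, y} :=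
      fun hD hx hy hxy => (eq_of_subset_of_card_le (by simp [insert_subset_iff, hx, hy])
        (by rw [hD, card_pair hxy.ne])).symm
    exact ⟨a, b, c, d, hac, hcb, hbd, eq_pair hB ha hb (hac.trans hcb),
      eq_pair hC hc hd (hcb.trans hbd)⟩

lemma crosses_iff {B C : Finset ℕ} (hB : #B = 2) (hC : #C = 2) :
    Crosses B C ↔ BlocksCross B C := by
  simp only [Crosses, BlocksCross, crossAsym_iff, hB, hC, true_and]

lemma connectedPairing_iff (hπ : ∀ B ∈ π, #B = 2) :
    ConnectedPairing π ↔ IsCrossingConnected π := by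
  constructor
  · intro h S hS hne hclosed
    by_contra hSπ
    refine h ⟨S, π \ S, union_sdiff_of_subset hS, disjoint_sdiff, hne,
      sdiff_nonempty.2 fun hπS => hSπ (hS.antisymm hπS), fun B hB C hC hBC => ?_⟩
    obtain ⟨hCπ, hCS⟩ := mem_sdiff.1 hC
    exact hCS (hclosed B hB C hCπ ((crosses_iff (hπ B (hS hB)) (hπ C hCπ)).1 hBC))
  · rintro h ⟨S, T, rfl, hST, hS, ⟨C, hC⟩, hcross⟩
    have hclosed : IsCrossingClosed (S ∪ T) S := fun B hB D hD hBD =>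
      (mem_union.1 hD).resolve_right fun hDT => hcross B hB D hDT
        ((crosses_iff (hπ B (mem_union_left T hB)) (hπ D hD)).2 hBD)
    have hSeq := h S subset_union_left hS hclosed
    exact disjoint_left.1 hST (hSeq ▸ mem_union_right S hC) hC

lemma parityReversing_iff :
    ParityReversing π ↔ ∀ B ∈ π, #B = 2 ∧ ∃ a ∈ B, ∃ b ∈ B, ¬ Even (a + b) := by
  refine forall₂_congr fun B _ => ⟨?_, ?_⟩
  · rintro ⟨a, b, rfl, ha, hb⟩
    have hab : ¬ Even (a + b) := Nat.not_even_iff_odd.2 (ha.add_even hb)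
    exact ⟨card_pair (by rintro rfl; exact hab (Even.add_self a)), a, by simp, b, by simp, hab⟩
  · rintro ⟨hB, a, ha, b, hb, hab⟩
    have hne : a ≠ b := by rintro rfl; exact hab (Even.add_self a)
    have hBab : B = {a, b} :=
      (eq_of_subset_of_card_le (by simp [insert_subset_iff, ha, hb])
        (by rw [hB, card_pair hne])).symm
    rcases Nat.even_or_odd a with ha | ha
    · exact ⟨b, a, hBab.trans (pair_comm a b), by grind, ha⟩
    · exact ⟨a, b, hBab, ha, by grind⟩

lemma ParityReversing.card_eq_two (h : ParityReversing π) : ∀ B ∈ π, #B = 2 :=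
  fun B hB => (parityReversing_iff.1 h B hB).1

lemma parityReversing_image_iff {e : ℕ → ℕ} (he : Set.InjOn e s)
    (hparity : ∀ x ∈ s, ∀ y ∈ s, Even (e x + e y) ↔ Even (x + y)) (hπ : ∀ B ∈ π, B ⊆ s) :
    ParityReversing (π.image (image e)) ↔ ParityReversing π := by
  simp only [parityReversing_iff, forall_mem_image, exists_mem_image]
  refine forall₂_congr fun B hB => ?_
  rw [card_image_of_injOn (he.mono (hπ B hB))]
  refine and_congr_right fun _ => exists_congr fun a => and_congr_right fun ha =>
    exists_congr fun b => and_congr_right fun hb => ?_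
  rw [hparity a (hπ B hB ha) b (hπ B hB hb)]

lemma crNum_eq_card (π : Finset (Finset ℕ)) :
    crNum π = #{p ∈ π ×ˢ π | CrossAsym p.1 p.2} := by
  rw [crNum, ← Set.ncard_coe_finset]
  simp only [coe_filter, mem_product, and_assoc]

lemma crossAsym_image_iff {e : ℕ → ℕ} (he : StrictMonoOn e s) {B C : Finset ℕ} (hB : B ⊆ s)
    (hC : C ⊆ s) : CrossAsym (B.image e) (C.image e) ↔ CrossAsym B C := by
  rw [crossAsym_iff, crossAsym_iff, interleaves_image_iff he hB hC,
    card_image_of_injOn (he.injOn.mono hB), card_image_of_injOn (he.injOn.mono hC)]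

lemma crNum_image {e : ℕ → ℕ} (he : StrictMonoOn e s) (hπ : ∀ B ∈ π, B ⊆ s) :
    crNum (π.image (image e)) = crNum π := by
  have hinj : Set.InjOn (image e) (π : Set (Finset ℕ)) :=
    (image_injOn_powerset_of_injOn he.injOn).mono fun B hB => mem_powerset.2 (hπ B hB)
  have hinj₂ : Set.InjOn (Prod.map (image e) (image e)) (π ×ˢ π : Finset _) := by
    rw [coe_product]
    exact hinj.prodMap hinj
  rw [crNum_eq_card, crNum_eq_card, ← prodMap_image_product, filter_image,
    card_image_of_injOn (hinj₂.mono (filter_subset _ _))]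
  refine congrArg card (filter_congr fun p hp => ?_)
  obtain ⟨hp₁, hp₂⟩ := mem_product.1 hp
  exact crossAsym_image_iff he (hπ _ hp₁) (hπ _ hp₂)

lemma crNum_eq_sum_crNum_restrict {π P : Finpartition s} (hle : π ≤ P)
    (hnc : IsNoncrossing P.parts) :
    crNum π.parts = ∑ V ∈ P.parts.attach, crNum (π.restrict (P.le V.2)).parts := by
  have hmem {V B} (hV : V ∈ P.parts) := mem_parts_restrict_of_le (B := B) hle hV
  simp only [crNum_eq_card]
  rw [← card_biUnion]
  · congr 1
    ext ⟨B, C⟩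
    simp only [mem_filter, mem_product, mem_biUnion, mem_attach, true_and, Subtype.exists]
    constructor
    · rintro ⟨⟨hB, hC⟩, hBC⟩
      obtain ⟨V, hV, hBV⟩ := hle hB
      obtain ⟨W, hW, hCW⟩ := hle hC
      have hVW : V = W := by
        by_contra hne
        exact hnc hV hW hne ((crossAsym_iff.1 hBC).2.2.mono hBV hCW)
      exact ⟨V, hV, ⟨(hmem hV).2 ⟨hB, hBV⟩, (hmem hV).2 ⟨hC, hVW ▸ hCW⟩⟩, hBC⟩
    · rintro ⟨V, hV, ⟨hB, hC⟩, hBC⟩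
      exact ⟨⟨((hmem hV).1 hB).1, ((hmem hV).1 hC).1⟩, hBC⟩
  · rintro ⟨V, hV⟩ - ⟨W, hW⟩ - hne
    refine disjoint_left.2 ?_
    rintro ⟨B, C⟩ hBV hBW
    have hBV := (mem_product.1 (mem_filter.1 hBV).1).1
    have hBW := (mem_product.1 (mem_filter.1 hBW).1).1
    obtain ⟨x, hx⟩ := Finpartition.nonempty_of_mem_parts _ hBV
    exact hne (Subtype.ext (P.eq_of_mem_parts hV hW (((hmem hV).1 hBV).2 hx)
      (((hmem hW).1 hBW).2 hx)))

/-- The parity-reversing pairings of `s` with `k` crossings. -/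
noncomputable def parityReversingPairings (s : Finset ℕ) (k : ℕ) : Finset (Finpartition s) :=
  {π | ParityReversing π.parts ∧ crNum π.parts = k}

/-- The connected parity-reversing pairings of `s` with `k` crossings. -/
noncomputable def connectedParityReversingPairings (s : Finset ℕ) (k : ℕ) :
    Finset (Finpartition s) :=
  {π | ParityReversing π.parts ∧ IsCrossingConnected π.parts ∧ crNum π.parts = k}

/-- The noncrossing partitions of `s` into blocks of even size. -/
noncomputable def noncrossingEvenPartitions (s : Finset ℕ) : Finset (Finpartition s) :=
  {P | IsNoncrossing P.parts ∧ ∀ V ∈ P.parts, Even #V}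

lemma mem_parityReversingPairings {k : ℕ} {π : Finpartition s} :
    π ∈ parityReversingPairings s k ↔ ParityReversing π.parts ∧ crNum π.parts = k :=
  mem_filter_univ _

lemma mem_connectedParityReversingPairings {k : ℕ} {π : Finpartition s} :
    π ∈ connectedParityReversingPairings s k ↔
      ParityReversing π.parts ∧ IsCrossingConnected π.parts ∧ crNum π.parts = k :=
  mem_filter_univ _

lemma mem_noncrossingEvenPartitions {P : Finpartition s} :
    P ∈ noncrossingEvenPartitions s ↔ IsNoncrossing P.parts ∧ ∀ V ∈ P.parts, Even #V :=
  mem_filter_univ _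

lemma isPairing_iff {n : ℕ} : IsPairing n π ↔
    (∃ P : Finpartition (Icc 1 (2 * n)), P.parts = π) ∧ ∀ B ∈ π, #B = 2 := by
  rw [exists_finpartition_parts_eq_iff, IsPairing]
  constructor
  · rintro ⟨hπ, hx⟩
    exact ⟨⟨fun B hB => ⟨card_pos.1 (by simp [hπ B hB]), (hπ B hB).2⟩, hx⟩, fun B hB => (hπ B hB).1⟩
  · rintro ⟨⟨hπ, hx⟩, hcard⟩
    exact ⟨fun B hB => ⟨hcard B hB, (hπ B hB).2⟩, hx⟩

lemma ncard_isPairing_and (n : ℕ) {Q : Finset (Finset ℕ) → Prop}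
    (hQ : ∀ π, Q π → ∀ B ∈ π, #B = 2) :
    Set.ncard {π | IsPairing n π ∧ Q π} =
      Set.ncard {P : Finpartition (Icc 1 (2 * n)) | Q P.parts} := by
  rw [← Set.ncard_image_of_injective _ finpartition_parts_injective]
  congr 1
  ext π
  simp only [Set.mem_ofPred_eq, isPairing_iff, Set.mem_image]
  constructor
  · rintro ⟨⟨⟨P, rfl⟩, -⟩, hP⟩
    exact ⟨P, hP, rfl⟩
  · rintro ⟨P, hP, rfl⟩
    exact ⟨⟨⟨P, rfl⟩, hQ _ hP⟩, hP⟩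

lemma rCount_eq_card (n k : ℕ) : rCount n k = #(parityReversingPairings (Icc 1 (2 * n)) k) := by
  rw [rCount, ncard_isPairing_and n fun _ h => h.1.card_eq_two, ← Set.ncard_coe_finset]
  congr 1
  ext P
  rw [mem_coe, mem_parityReversingPairings, Set.mem_ofPred_eq]

lemma bCount_eq_card (n k : ℕ) :
    bCount n k = #(connectedParityReversingPairings (Icc 1 (2 * n)) k) := by
  rw [bCount, ncard_isPairing_and n fun _ h => h.1.card_eq_two, ← Set.ncard_coe_finset]
  congr 1
  ext P
  rw [mem_coe, mem_connectedParityReversingPairings, Set.mem_ofPred_eq]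
  exact and_congr_right fun h => and_congr_left' (connectedPairing_iff h.card_eq_two)

lemma isNoncrossing_iff : IsNoncrossing π ↔ ¬ ∃ a b c d : ℕ, a < b ∧ b < c ∧ c < d ∧
    ∃ B ∈ π, ∃ C ∈ π, B ≠ C ∧ a ∈ B ∧ c ∈ B ∧ b ∈ C ∧ d ∈ C := by
  constructor
  · rintro h ⟨a, b, c, d, hab, hbc, hcd, B, hB, C, hC, hne, ha, hc, hb, hd⟩
    exact h hB hC hne ⟨a, ha, b, hb, c, hc, d, hd, hab, hbc, hcd⟩
  · rintro h B hB C hC hne ⟨a, ha, b, hb, c, hc, d, hd, hab, hbc, hcd⟩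
    exact h ⟨a, b, c, d, hab, hbc, hcd, B, hB, C, hC, hne, ha, hc, hb, hd⟩

lemma ncEvenPartitions_eq_image (n : ℕ) :
    NCEvenPartitions n = (noncrossingEvenPartitions (Icc 1 (2 * n))).image Finpartition.parts := by
  ext π
  rw [NCEvenPartitions]
  refine (@mem_filter _ _ (_) _ _).trans ?_
  rw [← isNoncrossing_iff]
  simp only [mem_image, mem_noncrossingEvenPartitions, mem_powerset]
  constructor
  · rintro ⟨hsub, hblocks, hx, hnc⟩
    obtain ⟨P, rfl⟩ := exists_finpartition_parts_eq_iff.2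
      ⟨fun B hB => ⟨(hblocks B hB).1, mem_powerset.1 (hsub hB)⟩, hx⟩
    exact ⟨P, ⟨hnc, fun B hB => (hblocks B hB).2⟩, rfl⟩
  · rintro ⟨P, ⟨hnc, heven⟩, rfl⟩
    obtain ⟨hblocks, hx⟩ := exists_finpartition_parts_eq_iff.1 ⟨P, rfl⟩
    exact ⟨fun B hB => mem_powerset.2 (P.le hB), fun B hB => ⟨(hblocks B hB).1, heven B hB⟩, hx,
      hnc⟩

lemma card_connectedParityReversingPairings_of_bijOn {e : ℕ → ℕ} (he : Set.BijOn e s t)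
    (hmono : StrictMonoOn e s) (hparity : ∀ x ∈ s, ∀ y ∈ s, Even (e x + e y) ↔ Even (x + y))
    (k : ℕ) :
    #(connectedParityReversingPairings s k) = #(connectedParityReversingPairings t k) := by
  refine card_bijective (imageFinpartition he) (bijective_imageFinpartition he) fun π => ?_
  have hsub : ∀ B ∈ π.parts, B ⊆ s := fun B hB => π.le hB
  rw [mem_connectedParityReversingPairings, mem_connectedParityReversingPairings,
    parts_imageFinpartition, parityReversing_image_iff hmono.injOn hparity hsub,
    isCrossingConnected_image_iff hmono hsub, crNum_image hmono hsub]

lemma card_connectedParityReversingPairings_eq_bCount {m : ℕ} {P : Finpartition (Icc 1 m)}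
    (hP : P ∈ noncrossingEvenPartitions (Icc 1 m)) {V : Finset ℕ} (hV : V ∈ P.parts) (k : ℕ) :
    #(connectedParityReversingPairings V k) = bCount (#V / 2) k := by
  obtain ⟨hnc, heven⟩ := mem_noncrossingEvenPartitions.1 hP
  rw [bCount_eq_card, Nat.two_mul_div_two_of_even (heven V hV)]
  refine card_connectedParityReversingPairings_of_bijOn (bijOn_rankIn V) (strictMonoOn_rankIn V)
    (fun x hx y hy => ?_) k
  rw [even_rankIn_add_rankIn_iff hnc heven hV hx hy, rankIn_Icc_one (mem_Icc.1 (P.le hV hx)).2,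
    rankIn_Icc_one (mem_Icc.1 (P.le hV hy)).2]

lemma noncrossingClosure_mem_noncrossingEvenPartitions {π : Finpartition s}
    (h : ParityReversing π.parts) : noncrossingClosure π ∈ noncrossingEvenPartitions s := by
  refine mem_noncrossingEvenPartitions.2 ⟨isNoncrossing_noncrossingClosure π, fun V hV => ?_⟩
  have hcard := (forall_mem_parts_iff_of_le (le_coarsen π _)).1 h.card_eq_two V hV
  exact even_card_of_forall_mem_parts fun B hB => hcard B hB ▸ even_two

/-- The numbers of crossings of `π` inside the blocks of `P`, in the form of the tuples
`(k_1, …, k_ℓ)` over which the decomposition sums. -/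
noncomputable def crossingProfile (P π : Finpartition s) : ∀ V ∈ P.parts, ℕ :=
  fun _ hV => crNum (π.restrict (P.le hV)).parts

lemma parityReversing_and_noncrossingClosure_eq_iff {P π : Finpartition s}
    (hP : IsNoncrossing P.parts) {κ : ∀ V ∈ P.parts, ℕ} :
    (ParityReversing π.parts ∧ noncrossingClosure π = P ∧ crossingProfile P π = κ) ↔
      π ≤ P ∧ ∀ V (hV : V ∈ P.parts),
        π.restrict (P.le hV) ∈ connectedParityReversingPairings V (κ V hV) := by
  simp only [mem_connectedParityReversingPairings, noncrossingClosure_eq_iff]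
  constructor
  · rintro ⟨hpr, ⟨-, hle, hconn⟩, rfl⟩
    exact ⟨hle, fun V hV => ⟨(forall_mem_parts_iff_of_le hle).1 hpr V hV, hconn V hV, rfl⟩⟩
  · rintro ⟨hle, h⟩
    exact ⟨(forall_mem_parts_iff_of_le hle).2 fun V hV => (h V hV).1,
      ⟨hP, hle, fun V hV => (h V hV).2.1⟩, funext₂ fun V hV => (h V hV).2.2⟩

lemma card_parityReversing_noncrossingClosure_crossingProfile_eq {P : Finpartition s}
    (hP : IsNoncrossing P.parts) (κ : ∀ V ∈ P.parts, ℕ) :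
    #{π : Finpartition s |
        ParityReversing π.parts ∧ noncrossingClosure π = P ∧ crossingProfile P π = κ} =
      ∏ V ∈ P.parts.attach, #(connectedParityReversingPairings V.1 (κ V.1 V.2)) := by
  rw [← card_filter_le_and_restrict_mem P fun V hV => connectedParityReversingPairings V (κ V hV)]
  exact congrArg card
    (filter_congr fun π _ => parityReversing_and_noncrossingClosure_eq_iff hP)

lemma crNum_eq_sum_crossingProfile {P π : Finpartition s} (h : noncrossingClosure π = P) :
    crNum π.parts = ∑ V ∈ P.parts.attach, crossingProfile P π V.1 V.2 :=
  have h := noncrossingClosure_eq_iff.1 h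
  crNum_eq_sum_crNum_restrict h.2.1 h.1

lemma card_parityReversingPairings_filter_noncrossingClosure_eq {P : Finpartition s}
    (hP : IsNoncrossing P.parts) (k : ℕ) :
    #{π ∈ parityReversingPairings s k | noncrossingClosure π = P} =
      ∑ κ ∈ P.parts.pi (fun _ => range (k + 1)) with ∑ V ∈ P.parts.attach, κ V.1 V.2 = k,
        ∏ V ∈ P.parts.attach, #(connectedParityReversingPairings V.1 (κ V.1 V.2)) := by
  rw [card_eq_sum_card_fiberwise (f := crossingProfile P)
    (t := {κ ∈ P.parts.pi (fun _ => range (k + 1)) | ∑ V ∈ P.parts.attach, κ V.1 V.2 = k})]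
  · refine sum_congr rfl fun κ hκ => ?_
    rw [← card_parityReversing_noncrossingClosure_crossingProfile_eq hP]
    congr 1
    ext π
    simp only [mem_filter, mem_univ, true_and, mem_parityReversingPairings]
    constructor
    · rintro ⟨⟨⟨hpr, -⟩, hcl⟩, hκ⟩
      exact ⟨hpr, hcl, hκ⟩
    · rintro ⟨hpr, hcl, rfl⟩
      exact ⟨⟨⟨hpr, (crNum_eq_sum_crossingProfile hcl).trans (mem_filter.1 hκ).2⟩, hcl⟩, rfl⟩
  · intro π hπ
    obtain ⟨hπ, hcl⟩ := mem_filter.1 hπ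
    have hsum := (crNum_eq_sum_crossingProfile hcl).symm.trans (mem_parityReversingPairings.1 hπ).2
    have hle (V : {V // V ∈ P.parts}) : crossingProfile P π V.1 V.2 ≤ k := by
      rw [← hsum]
      exact single_le_sum_of_canonicallyOrdered
        (f := fun V : {V // V ∈ P.parts} => crossingProfile P π V.1 V.2) (mem_attach _ V)
    exact mem_filter.2 ⟨mem_pi.2 fun V hV => mem_range.2 (Nat.lt_succ_of_le (hle ⟨V, hV⟩)), hsum⟩

lemma card_parityReversingPairings (s : Finset ℕ) (k : ℕ) :
    #(parityReversingPairings s k) = ∑ P ∈ noncrossingEvenPartitions s,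
      ∑ κ ∈ P.parts.pi (fun _ => range (k + 1)) with ∑ V ∈ P.parts.attach, κ V.1 V.2 = k,
        ∏ V ∈ P.parts.attach, #(connectedParityReversingPairings V.1 (κ V.1 V.2)) := by
  rw [card_eq_sum_card_fiberwise fun π hπ => noncrossingClosure_mem_noncrossingEvenPartitions
    (mem_parityReversingPairings.1 hπ).1]
  exact sum_congr rfl fun P hP => card_parityReversingPairings_filter_noncrossingClosure_eq
    (mem_noncrossingEvenPartitions.1 hP).1 k

end Pairing

/-- Crossing-refined decomposition into connected components:
`r_{n,k} = ∑_{{V_1,…,V_ℓ} ∈ NC_even(2n)} ∑_{k_1+⋯+k_ℓ = k} b_{|V_1|/2,k_1} ⋯ b_{|V_ℓ|/2,k_ℓ}`. -/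
theorem rCount_eq_sum_ncEven_sum_prod_bCount (n k : ℕ) (hn : 1 ≤ n) :
    rCount n k = ∑ π ∈ NCEvenPartitions n,
      ∑ κ ∈ (Finset.pi π (fun _ => Finset.range (k + 1))).filter
          (fun κ => (∑ B ∈ π.attach, κ B.1 B.2) = k),
        ∏ B ∈ π.attach, bCount (B.1.card / 2) (κ B.1 B.2) := by
  rw [rCount_eq_card, card_parityReversingPairings, ncEvenPartitions_eq_image,
    Finset.sum_image finpartition_parts_injective.injOn]
  refine Finset.sum_congr rfl fun P hP => Finset.sum_congr rfl fun κ _ =>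
    Finset.prod_congr rfl fun V _ => ?_
  exact card_connectedParityReversingPairings_eq_bCount hP V.2 _
end

section
/- For every even n ≥ 2, every parity-reversing pairing on [2n] has at most n(n−2)/2 crossings; in particular r_{n,k} = 0 for all k > n(n−2)/2. -/
open scoped Classical

/-!
A block `{a, b}` with `a < b` is only crossed by blocks having one element strictly between `a` and
`b` and the other outside `[a, b]`. The blocks being disjoint, at most `b - a - 1` of them have an
element inside and at most `2n - 1 - (b - a)` an element outside. If `b - a` is odd, these two
numbers are even with sum `2(n - 1)`, so the smaller one is at most `2⌊(n - 1) / 2⌋`. Summing over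
the `n` blocks counts every crossing twice.
-/

open Finset

theorem pair_eq_pair_iff_of_lt {α : Type*} [LinearOrder α] {a b c d : α} (hab : a < b)
    (hcd : c < d) : ({a, b} : Finset α) = {c, d} ↔ a = c ∧ b = d := by
  rw [← coe_inj, coe_pair, coe_pair, Set.pair_eq_pair_iff, or_iff_left]
  rintro ⟨rfl, rfl⟩
  exact hab.asymm hcd

theorem card_le_card_of_forall_inter_nonempty {α : Type*} [DecidableEq α] {F : Finset (Finset α)}
    {t : Finset α} (hF : (F : Set (Finset α)).PairwiseDisjoint id)
    (ht : ∀ C ∈ F, (C ∩ t).Nonempty) : #F ≤ #t :=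
  calc
    #F ≤ #(F.biUnion fun C ↦ C ∩ t) :=
      card_le_card_biUnion (hF.mono fun _ ↦ inter_subset_left) ht
    _ ≤ #t := card_le_card (biUnion_subset.2 fun _ _ ↦ inter_subset_right)

theorem CrossAsym.exists_forall_lt {B C : Finset ℕ} (h : CrossAsym B C) :
    ∃ a ∈ B, ∀ c ∈ C, a < c := by
  obtain ⟨a, b, c, d, hac, hcb, hbd, rfl, rfl⟩ := h
  refine ⟨a, mem_insert_self a {b}, ?_⟩
  simp only [mem_insert, mem_singleton, forall_eq_or_imp, forall_eq]
  omega

theorem CrossAsym.asymm {B C : Finset ℕ} (hBC : CrossAsym B C) : ¬ CrossAsym C B := by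
  intro hCB
  obtain ⟨a, haB, ha⟩ := hBC.exists_forall_lt
  obtain ⟨c, hcC, hc⟩ := hCB.exists_forall_lt
  exact (ha c hcC).asymm (hc a haB)

theorem Crosses.exists_eq_pair {a b : ℕ} {C : Finset ℕ} (hab : a < b) (h : Crosses {a, b} C) :
    ∃ c ∈ Ioo a b, ∃ d ∉ Icc a b, C = {c, d} := by
  simp only [mem_Ioo, mem_Icc]
  rcases h with ⟨a', b', c, d, hac, hcb, hbd, hB, rfl⟩ | ⟨d, c, a', b', hda, hac, hcb, rfl, hB⟩
  all_goals obtain ⟨rfl, rfl⟩ := (pair_eq_pair_iff_of_lt hab (by omega)).1 hB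
  · exact ⟨c, ⟨hac, hcb⟩, d, by omega, rfl⟩
  · exact ⟨c, ⟨hac, hcb⟩, d, by omega, pair_comm d c⟩

/-- The number of blocks of `π` crossing `B`, that is, the degree of `B` in the crossing graph
of `π`. -/
noncomputable def crDegree (π : Finset (Finset ℕ)) (B : Finset ℕ) : ℕ :=
  #{C ∈ π | Crosses B C}

theorem crDegree_eq_add (π : Finset (Finset ℕ)) (B : Finset ℕ) :
    crDegree π B = #{C ∈ π | CrossAsym B C} + #{C ∈ π | CrossAsym C B} := by
  have hunion : ({C ∈ π | Crosses B C} : Finset (Finset ℕ)) =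
      {C ∈ π | CrossAsym B C} ∪ {C ∈ π | CrossAsym C B} := by
    ext C
    rw [mem_filter, mem_union, mem_filter, mem_filter, ← and_or_left, Crosses]
  rw [crDegree, hunion, card_union_of_disjoint]
  exact disjoint_filter.2 fun _ _ ↦ CrossAsym.asymm

theorem crNum_eq_sum_card (π : Finset (Finset ℕ)) :
    crNum π = ∑ B ∈ π, #{C ∈ π | CrossAsym B C} := by
  have hpairs : {p : Finset ℕ × Finset ℕ | p.1 ∈ π ∧ p.2 ∈ π ∧ CrossAsym p.1 p.2} =
      ({p ∈ π ×ˢ π | CrossAsym p.1 p.2} : Finset (Finset ℕ × Finset ℕ)) := by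
    ext p
    simp only [coe_filter, mem_product, Set.mem_ofPred_eq, and_assoc]
  simp only [crNum, hpairs, Set.ncard_coe_finset, card_filter, sum_product]

theorem sum_crDegree (π : Finset (Finset ℕ)) : ∑ B ∈ π, crDegree π B = 2 * crNum π := by
  have hswap : ∑ B ∈ π, #{C ∈ π | CrossAsym C B} = crNum π := by
    rw [crNum_eq_sum_card]
    exact (sum_card_bipartiteAbove_eq_sum_card_bipartiteBelow CrossAsym).symm
  simp only [crDegree_eq_add, sum_add_distrib, hswap, ← crNum_eq_sum_card, two_mul]

section PairwiseDisjoint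

variable {π : Finset (Finset ℕ)} {a b : ℕ}

theorem crDegree_le_card {B t : Finset ℕ} (hπ : (π : Set (Finset ℕ)).PairwiseDisjoint id)
    (ht : ∀ C ∈ π, Crosses B C → (C ∩ t).Nonempty) : crDegree π B ≤ #t :=
  card_le_card_of_forall_inter_nonempty (hπ.subset (filter_subset _ π)) fun C hC ↦
    ht C (mem_filter.1 hC).1 (mem_filter.1 hC).2

theorem crDegree_pair_le_card_Ioo (hπ : (π : Set (Finset ℕ)).PairwiseDisjoint id) (hab : a < b) :
    crDegree π {a, b} ≤ #(Ioo a b) := by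
  refine crDegree_le_card hπ fun C _ hcross ↦ ?_
  obtain ⟨c, hc, d, -, rfl⟩ := hcross.exists_eq_pair hab
  exact ⟨c, mem_inter.2 ⟨mem_insert_self c {d}, hc⟩⟩

theorem crDegree_pair_le_card_sdiff_Icc {s : Finset ℕ}
    (hπ : (π : Set (Finset ℕ)).PairwiseDisjoint id) (hs : ∀ C ∈ π, C ⊆ s) (hab : a < b) :
    crDegree π {a, b} ≤ #(s \ Icc a b) := by
  refine crDegree_le_card hπ fun C hC hcross ↦ ?_
  obtain ⟨c, -, d, hd, rfl⟩ := hcross.exists_eq_pair hab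
  have hdC : d ∈ ({c, d} : Finset ℕ) := mem_insert_of_mem (mem_singleton_self d)
  exact ⟨d, mem_inter.2 ⟨hdC, mem_sdiff.2 ⟨hs _ hC hdC, hd⟩⟩⟩

end PairwiseDisjoint

theorem ParityReversing.exists_eq_pair {π : Finset (Finset ℕ)} (hpar : ParityReversing π)
    {B : Finset ℕ} (hB : B ∈ π) : ∃ a b, a < b ∧ Odd (b - a) ∧ B = {a, b} := by
  obtain ⟨a, b, rfl, ha, hb⟩ := hpar B hB
  have hne : a ≠ b := by
    rintro rfl
    exact Nat.not_even_iff_odd.2 ha hb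
  rcases hne.lt_or_gt with hab | hba
  · exact ⟨a, b, hab, Nat.Even.sub_odd hab.le hb ha, rfl⟩
  · exact ⟨b, a, hba, Nat.Odd.sub_even hba.le ha hb, pair_comm a b⟩

namespace IsPairing

variable {n : ℕ} {π : Finset (Finset ℕ)}

theorem pairwiseDisjoint (hπ : IsPairing n π) : (π : Set (Finset ℕ)).PairwiseDisjoint id := by
  intro B hB C hC hne
  refine disjoint_left.2 fun x hxB hxC ↦ hne ?_
  exact (hπ.2 x ((hπ.1 B hB).2 hxB)).unique ⟨hB, hxB⟩ ⟨hC, hxC⟩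

theorem biUnion_eq (hπ : IsPairing n π) : π.biUnion id = Icc 1 (2 * n) := by
  refine (biUnion_subset.2 fun B hB ↦ (hπ.1 B hB).2).antisymm fun x hx ↦ ?_
  obtain ⟨B, hB, -⟩ := hπ.2 x hx
  exact mem_biUnion.2 ⟨B, hB⟩

theorem card_eq (hπ : IsPairing n π) : #π = n := by
  have hcount : #π * 2 = 2 * n :=
    calc
      #π * 2 = ∑ B ∈ π, #B := (sum_const_nat fun B hB ↦ (hπ.1 B hB).1).symm
      _ = #(π.biUnion id) := (card_biUnion hπ.pairwiseDisjoint).symm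
      _ = 2 * n := by rw [hπ.biUnion_eq, Nat.card_Icc, Nat.add_sub_cancel]
  omega

theorem crDegree_pair_le (hπ : IsPairing n π) {a b : ℕ} (hB : {a, b} ∈ π) (hab : a < b)
    (hodd : Odd (b - a)) : crDegree π {a, b} ≤ 2 * ((n - 1) / 2) := by
  have hground : Icc a b ⊆ Icc 1 (2 * n) := by
    obtain ⟨ha, hb⟩ := insert_subset_iff.1 (hπ.1 _ hB).2
    exact Icc_subset_Icc (mem_Icc.1 ha).1 (mem_Icc.1 (singleton_subset_iff.1 hb)).2
  have hcard : b + 1 - a ≤ 2 * n := by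
    simpa only [Nat.card_Icc, Nat.add_sub_cancel] using card_le_card hground
  have hinside : crDegree π {a, b} ≤ b - a - 1 := by
    simpa only [Nat.card_Ioo] using crDegree_pair_le_card_Ioo hπ.pairwiseDisjoint hab
  have houtside : crDegree π {a, b} ≤ 2 * n - (b + 1 - a) := by
    simpa only [card_sdiff_of_subset hground, Nat.card_Icc, Nat.add_sub_cancel] using
      crDegree_pair_le_card_sdiff_Icc hπ.pairwiseDisjoint (fun C hC ↦ (hπ.1 C hC).2) hab
  obtain ⟨k, hk⟩ := hodd
  omega

theorem crNum_le (hπ : IsPairing n π) (hpar : ParityReversing π) :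
    crNum π ≤ n * ((n - 1) / 2) := by
  have hdegree : ∀ B ∈ π, crDegree π B ≤ 2 * ((n - 1) / 2) := by
    intro B hB
    obtain ⟨a, b, hab, hodd, rfl⟩ := hpar.exists_eq_pair hB
    exact hπ.crDegree_pair_le hB hab hodd
  have htwice : 2 * crNum π ≤ 2 * (n * ((n - 1) / 2)) :=
    calc
      2 * crNum π = ∑ B ∈ π, crDegree π B := (sum_crDegree π).symm
      _ ≤ #π * (2 * ((n - 1) / 2)) := sum_le_card_nsmul π _ _ hdegree
      _ = 2 * (n * ((n - 1) / 2)) := by rw [hπ.card_eq, Nat.mul_left_comm]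
  exact Nat.le_of_mul_le_mul_left htwice two_pos

end IsPairing

theorem rCount_eq_zero_of_forall_crNum_ne {n k : ℕ}
    (h : ∀ π : Finset (Finset ℕ), IsPairing n π → ParityReversing π → crNum π ≠ k) :
    rCount n k = 0 := by
  have hempty : {π : Finset (Finset ℕ) | IsPairing n π ∧ ParityReversing π ∧ crNum π = k} = ∅ :=
    Set.eq_empty_of_forall_notMem fun π hπ ↦ h π hπ.1 hπ.2.1 hπ.2.2
  rw [rCount, hempty, Set.ncard_empty]

theorem rCount_max_crossings_even_general (n : ℕ) :
    (∀ π : Finset (Finset ℕ), IsPairing n π → ParityReversing π → crNum π ≤ n * ((n - 1) / 2)) ∧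
    (∀ k : ℕ, n * ((n - 1) / 2) < k → rCount n k = 0) :=
  ⟨fun _ hπ hpar ↦ hπ.crNum_le hpar,
    fun _ hk ↦ rCount_eq_zero_of_forall_crNum_ne fun _ hπ hpar ↦
      ((hπ.crNum_le hpar).trans_lt hk).ne⟩

/-- For even `n ≥ 2`, every parity-reversing pairing on `[2n]` has at most `n(n−2)/2`
crossings; in particular `r_{n,k} = 0` for `k > n(n−2)/2`. -/
theorem rCount_max_crossings_even (n : ℕ) (hn : 2 ≤ n) (heven : Even n) :
    (∀ π : Finset (Finset ℕ), IsPairing n π → ParityReversing π →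
      crNum π ≤ n * (n - 2) / 2) ∧
    (∀ k : ℕ, n * (n - 2) / 2 < k → rCount n k = 0) := by
  have hbound : n * (n - 2) / 2 = n * ((n - 1) / 2) := by
    have hhalf : (n - 2) / 2 = (n - 1) / 2 := by
      obtain ⟨m, rfl⟩ := heven
      omega
    rw [Nat.mul_div_assoc n (heven.tsub even_two).two_dvd, hhalf]
  exact hbound ▸ rCount_max_crossings_even_general n
end
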